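/- Let K be a totally real number field of degree d and I ⊆ O_K a nonzero ideal. Then there exist Q-linearly independent totally nonnegative elements α_1,...,α_d ∈ I⁺ such that ∏_{i=1}^d h(α_i) ≤ (3d√d)^d · (N_K(I)·√|Δ_K|)^{d+1}. -/

import Mathlib

open NumberField

/-- The denominator ideal `(𝒪_K : α) = {x ∈ 𝒪_K : xα ∈ 𝒪_K}` of `α ∈ K`; its absolute
norm equals `∏_{v ∤ ∞} max(1,|α|_v)^{d_v}`. -/
noncomputable def denominatorIdeal {K : Type*} [Field K] [NumberField K] (α : K) :
    Ideal (𝓞 K) where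
  carrier := {x : 𝓞 K | IsIntegral ℤ ((x : K) * α)}
  add_mem' := by
    intro a b ha hb
    simpa [add_mul] using ha.add hb
  zero_mem' := by simpa using isIntegral_zero
  smul_mem' := by
    intro c y hy
    have hc : IsIntegral ℤ ((c : K)) := RingOfIntegers.isIntegral_coe c
    simpa [smul_eq_mul, mul_assoc] using hc.mul hy

/-- The absolute Weil height of `α ∈ K`, for a totally real number field `K` of degree
`d` with real embeddings `σ_1,…,σ_d`:
`h(α) = (N(denominator ideal of α) · ∏_i max(1,|σ_i α|))^{1/d}`, which agrees with
`∏_{v ∈ M(K)} max(1,|α|_v)^{d_v/d}`. -/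
noncomputable def weilHeight {K : Type*} [Field K] [NumberField K]
    (σ : Fin (Module.finrank ℚ K) → (K →+* ℝ)) (α : K) : ℝ :=
  ((Ideal.absNorm (denominatorIdeal α) : ℝ) * ∏ i, max 1 |σ i α|) ^
    ((Module.finrank ℚ K : ℝ)⁻¹)

/-!
By Minkowski's theorem some nonzero `θ ∈ I` has all its conjugates but one smaller than `1` in
absolute value, and the remaining one at most `N(I)√|Δ|`; hence `h(θ)^d ≤ N(I)√|Δ|`. The same
inequalities force `K = ℚ(θ²)`, so `θ², θ⁴, …, θ^{2d}` are linearly independent elements of `I`, and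
they are totally nonnegative because they are squares. Since `h(θ^n) = h(θ)^n`, the product of their
heights is `h(θ)^{d(d+1)}`.
-/

open Module NumberField.InfinitePlace NumberField.mixedEmbedding
open scoped nonZeroDivisors NNReal IntermediateField

section PrimitiveElement

variable {F E : Type*} [Field F] [Field E] [Algebra F E] [FiniteDimensional F E]

theorem linearIndependent_pow_succ_of_adjoin_eq_top {x : E} (hx : F⟮x⟯ = ⊤) (hx0 : x ≠ 0) :
    LinearIndependent F fun i : Fin (finrank F E) => x ^ ((i : ℕ) + 1) := by
  have hpow : LinearIndependent F fun i : Fin (finrank F E) => x ^ (i : ℕ) := by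
    rw [← (Field.primitive_element_iff_minpoly_natDegree_eq F x).mp hx]
    exact linearIndependent_pow x
  have hmul : Function.Injective (LinearMap.mulRight F x) := mul_left_injective₀ hx0
  simpa only [pow_succ, Function.comp_def, LinearMap.mulRight_apply] using
    hpow.map_injOn (LinearMap.mulRight F x) hmul.injOn

end PrimitiveElement

section RealPlace

variable {K : Type*} [Field K]

/-- The infinite place `x ↦ |s x|` of a field attached to a real embedding `s`; it transfers
statements about `InfinitePlace K` to the family `σ` of real embeddings. -/
noncomputable def realPlace (s : K →+* ℝ) : InfinitePlace K :=
  InfinitePlace.mk (Complex.ofRealHom.comp s)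

theorem realPlace_apply (s : K →+* ℝ) (x : K) : realPlace s x = |s x| := by
  simp [realPlace, InfinitePlace.apply]

theorem isReal_ofRealHom_comp (s : K →+* ℝ) :
    ComplexEmbedding.IsReal (Complex.ofRealHom.comp s) := by
  rw [ComplexEmbedding.isReal_iff]
  ext x
  simp [ComplexEmbedding.conjugate_coe_eq]

theorem isReal_realPlace (s : K →+* ℝ) : (realPlace s).IsReal :=
  ⟨_, isReal_ofRealHom_comp s, rfl⟩

theorem realPlace_injective : Function.Injective (realPlace : (K →+* ℝ) → InfinitePlace K) := by
  intro s t hst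
  have hcomp : Complex.ofRealHom.comp s = Complex.ofRealHom.comp t := by
    rcases mk_eq_iff.mp hst with h | h
    · exact h
    · rwa [ComplexEmbedding.isReal_iff.mp (isReal_ofRealHom_comp s)] at h
  ext x
  simpa using RingHom.congr_fun hcomp x

end RealPlace

section Minkowski

variable {K : Type*} [Field K] [NumberField K]

theorem finite_setOf_infinitePlace_le (r : ℝ) :
    {a : 𝓞 K | ∀ w : InfinitePlace K, w (a : K) ≤ r}.Finite := by
  refine ((Embeddings.finite_of_norm_le K ℂ r).preimage
    RingOfIntegers.coe_injective.injOn).subset fun a ha => ?_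
  exact ⟨a.isIntegral_coe, fun φ => ha (InfinitePlace.mk φ)⟩

theorem exists_ne_zero_mem_ideal_lt_of_isReal (I : (Ideal (𝓞 K))⁰) {w₀ : InfinitePlace K}
    (hw₀ : w₀.IsReal) {B : ℝ≥0}
    (hB : minkowskiBound K (FractionalIdeal.mk0 K I) < convexBodyLTFactor K * B) :
    ∃ a ∈ (I : Ideal (𝓞 K)), a ≠ 0 ∧ (∀ w ≠ w₀, w (a : K) < 1) ∧ w₀ (a : K) < B := by
  classical
  have hvol : minkowskiBound K (FractionalIdeal.mk0 K I) <
      MeasureTheory.volume (convexBodyLT K fun w => if w = w₀ then B else 1) := by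
    rw [convexBodyLT_volume, ← Finset.prod_erase_mul _ _ (Finset.mem_univ w₀)]
    simp_rw [ite_pow, one_pow]
    rw [Finset.prod_ite_eq']
    simpa [mult, hw₀] using hB
  obtain ⟨_, hmem, ha0, hlt⟩ := exists_ne_zero_mem_ideal_lt K _ hvol
  obtain ⟨a, ha, rfl⟩ := (FractionalIdeal.mem_coeIdeal _).mp hmem
  refine ⟨a, ha, RingOfIntegers.coe_ne_zero_iff.mp ha0, fun w hw => ?_, ?_⟩
  · simpa [hw] using hlt w
  · simpa using hlt w₀

/-- The closed bound follows from the open ones `w₀ a < C`, `C > B`, because only finitely many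
integers satisfy the latter for `C = B + 1`. -/
theorem exists_ne_zero_mem_ideal_le_of_isReal (I : (Ideal (𝓞 K))⁰) {w₀ : InfinitePlace K}
    (hw₀ : w₀.IsReal) {B : ℝ≥0}
    (hB : minkowskiBound K (FractionalIdeal.mk0 K I) ≤ convexBodyLTFactor K * B) :
    ∃ a ∈ (I : Ideal (𝓞 K)), a ≠ 0 ∧ (∀ w ≠ w₀, w (a : K) < 1) ∧ w₀ (a : K) ≤ B := by
  have hexists {C : ℝ≥0} (hC : B < C) :
      ∃ a ∈ (I : Ideal (𝓞 K)), a ≠ 0 ∧ (∀ w ≠ w₀, w (a : K) < 1) ∧ w₀ (a : K) < C :=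
    exists_ne_zero_mem_ideal_lt_of_isReal I hw₀ <| hB.trans_lt <| by
      exact_mod_cast mul_lt_mul_of_pos_left hC (pos_iff_ne_zero.mpr (convexBodyLTFactor_ne_zero K))
  let T : Set (𝓞 K) := {a | a ∈ (I : Ideal (𝓞 K)) ∧ a ≠ 0 ∧ (∀ w ≠ w₀, w (a : K) < 1) ∧
    w₀ (a : K) < B + 1}
  have hfinite : T.Finite := by
    refine (finite_setOf_infinitePlace_le (B + 1 : ℝ)).subset ?_
    rintro a ⟨-, -, halt, haB⟩ w
    rcases eq_or_ne w w₀ with rfl | hw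
    · exact haB.le
    · exact (halt w hw).le.trans (le_add_of_nonneg_left B.2)
  have hnonempty : T.Nonempty := by simpa [T, Set.Nonempty] using hexists (lt_add_one B)
  obtain ⟨a, ⟨haI, ha0, halt, haB⟩, hmin⟩ :=
    T.exists_min_image (fun a => w₀ (a : K)) hfinite hnonempty
  refine ⟨a, haI, ha0, halt, le_of_not_gt fun hlt => ?_⟩
  obtain ⟨b, hbI, hb0, hblt, hba⟩ := hexists (C := ⟨w₀ (a : K), apply_nonneg _ _⟩) hlt
  exact (hmin b ⟨hbI, hb0, hblt, hba.trans haB⟩).not_gt hba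

theorem minkowskiBound_mk0_le (I : (Ideal (𝓞 K))⁰) :
    minkowskiBound K (FractionalIdeal.mk0 K I) ≤ convexBodyLTFactor K *
      ((Ideal.absNorm (I : Ideal (𝓞 K)) * NNReal.sqrt ‖discr K‖₊ : ℝ≥0) : ENNReal) := by
  have hpi : (2 : ℝ≥0) ≤ NNReal.pi := Real.two_le_pi
  have heq : minkowskiBound K (FractionalIdeal.mk0 K I) =
      ((Ideal.absNorm (I : Ideal (𝓞 K)) * (2⁻¹ ^ nrComplexPlaces K * NNReal.sqrt ‖discr K‖₊) *
        2 ^ finrank ℚ K : ℝ≥0) : ENNReal) := by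
    rw [minkowskiBound, volume_fundamentalDomain_fractionalIdealLatticeBasis,
      volume_fundamentalDomain_latticeBasis, FractionalIdeal.coe_mk0,
      FractionalIdeal.coeIdeal_absNorm, mixedEmbedding.finrank]
    simp [ENNReal.inv_pow]
  rw [heq, ← ENNReal.coe_mul, ENNReal.coe_le_coe, ← card_add_two_mul_card_eq_rank]
  calc
    _ = 2 ^ nrRealPlaces K * 2 ^ nrComplexPlaces K *
          (Ideal.absNorm (I : Ideal (𝓞 K)) * NNReal.sqrt ‖discr K‖₊) := by
      rw [inv_pow, pow_add, two_mul, pow_add]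
      field_simp
    _ ≤ convexBodyLTFactor K *
          (Ideal.absNorm (I : Ideal (𝓞 K)) * NNReal.sqrt ‖discr K‖₊) := by
      rw [convexBodyLTFactor]
      gcongr

theorem exists_ne_zero_mem_ideal_le_absNorm_mul_sqrt_discr {I : Ideal (𝓞 K)} (hI : I ≠ ⊥)
    {w₀ : InfinitePlace K} (hw₀ : w₀.IsReal) :
    ∃ a ∈ I, a ≠ 0 ∧ (∀ w ≠ w₀, w (a : K) < 1) ∧
      w₀ (a : K) ≤ Ideal.absNorm I * √|(discr K : ℝ)| := by
  simpa [Int.norm_eq_abs] using exists_ne_zero_mem_ideal_le_of_isReal _ hw₀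
    (minkowskiBound_mk0_le ⟨I, mem_nonZeroDivisors_iff_ne_zero.mpr hI⟩)

theorem one_le_absNorm_mul_sqrt_discr {I : Ideal (𝓞 K)} (hI : I ≠ ⊥) :
    1 ≤ (Ideal.absNorm I : ℝ) * √|(discr K : ℝ)| := by
  have hN : (1 : ℝ) ≤ Ideal.absNorm I := by
    exact_mod_cast Nat.one_le_iff_ne_zero.mpr (mt Ideal.absNorm_eq_zero_iff.mp hI)
  have hΔ : 1 ≤ √|(discr K : ℝ)| := by
    rw [Real.one_le_sqrt]
    exact_mod_cast Int.one_le_abs (discr_ne_zero K)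
  exact one_le_mul_of_one_le_of_one_le hN hΔ

end Minkowski

section Height

variable {K : Type*} [Field K] [NumberField K] (σ : Fin (finrank ℚ K) → (K →+* ℝ))

theorem denominatorIdeal_coe (a : 𝓞 K) : denominatorIdeal (a : K) = ⊤ := by
  rw [Ideal.eq_top_iff_one]
  change IsIntegral ℤ (((1 : 𝓞 K) : K) * (a : K))
  simpa using a.isIntegral_coe

theorem weilHeight_coe (a : 𝓞 K) :
    weilHeight σ (a : K) = (∏ i, max 1 |σ i a|) ^ ((finrank ℚ K : ℝ)⁻¹) := by
  simp [weilHeight, denominatorIdeal_coe]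

theorem weilHeight_coe_pow_finrank (a : 𝓞 K) :
    weilHeight σ (a : K) ^ finrank ℚ K = ∏ i, max 1 |σ i a| := by
  rw [weilHeight_coe, Real.rpow_inv_natCast_pow (by positivity) finrank_pos.ne']

theorem weilHeight_coe_pow (a : 𝓞 K) (n : ℕ) :
    weilHeight σ ((a ^ n : 𝓞 K) : K) = weilHeight σ (a : K) ^ n := by
  have hmax (i) : max 1 |σ i ((a ^ n : 𝓞 K) : K)| = max 1 |σ i a| ^ n := by
    simpa [abs_pow] using
      (pow_left_monotoneOn (n := n)).map_max (Set.mem_ofPred.mpr zero_le_one)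
        (Set.mem_ofPred.mpr (abs_nonneg (σ i a))) |>.symm
  simp_rw [weilHeight_coe, hmax]
  rw [Finset.prod_pow, Real.rpow_pow_comm (by positivity)]

theorem prod_weilHeight_sq_pow_succ (a : 𝓞 K) :
    ∏ i : Fin (finrank ℚ K), weilHeight σ (((a ^ 2) ^ ((i : ℕ) + 1) : 𝓞 K) : K) =
      (∏ i, max 1 |σ i a|) ^ (finrank ℚ K + 1) := by
  have hexp (d : ℕ) : ∑ i : Fin d, 2 * ((i : ℕ) + 1) = d * (d + 1) := by
    induction d with
    | zero => rfl
    | succ d ih =>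
      simp only [Fin.sum_univ_castSucc, Fin.val_castSucc, Fin.val_last, ih]
      ring
  simp_rw [← pow_mul, weilHeight_coe_pow]
  rw [Finset.prod_pow_eq_pow_sum, hexp, pow_mul, weilHeight_coe_pow_finrank]

end Height

theorem one_le_three_mul_mul_sqrt_pow (d : ℕ) : 1 ≤ (3 * (d : ℝ) * √d) ^ d := by
  rcases d.eq_zero_or_pos with rfl | hpos
  · simp
  · have hd : (1 : ℝ) ≤ d := by exact_mod_cast hpos
    exact one_le_pow₀ (by nlinarith [Real.one_le_sqrt.mpr hd])

theorem positive_successive_minima_height_general (K : Type*) [Field K] [NumberField K]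
    (σ : Fin (finrank ℚ K) → (K →+* ℝ)) (hσ : Function.Injective σ)
    (I : Ideal (𝓞 K)) (hI : I ≠ ⊥) :
    ∃ α : Fin (finrank ℚ K) → 𝓞 K,
      (∀ i, α i ∈ I) ∧ (∀ i j, 0 ≤ σ j (α i : K)) ∧
      LinearIndependent ℚ (fun i => (α i : K)) ∧
      ∏ i, weilHeight σ (α i : K) ≤
        ((Ideal.absNorm I : ℝ) * √|(discr K : ℝ)|) ^ (finrank ℚ K + 1) := by
  let i₀ : Fin (finrank ℚ K) := ⟨0, finrank_pos⟩
  obtain ⟨θ, hθI, hθ0, hθlt, hθle⟩ :=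
    exists_ne_zero_mem_ideal_le_absNorm_mul_sqrt_discr hI (isReal_realPlace (σ i₀))
  refine ⟨fun i => (θ ^ 2) ^ ((i : ℕ) + 1), fun i => ?_, fun i j => ?_, ?_, ?_⟩
  · exact I.pow_mem_of_mem (I.pow_mem_of_mem hθI 2 two_pos) _ (Nat.succ_pos i)
  · simp only [map_pow]
    positivity
  · have hprim : ℚ⟮((θ ^ 2 : 𝓞 K) : K)⟯ = ⊤ :=
      is_primitive_element_of_infinitePlace_lt (pow_ne_zero 2 hθ0)
        (fun w hw => by simpa using pow_lt_one₀ (apply_nonneg w _) (hθlt w hw) two_ne_zero)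
        (Or.inl (isReal_realPlace (σ i₀)))
    simpa only [map_pow] using linearIndependent_pow_succ_of_adjoin_eq_top hprim
      (RingOfIntegers.coe_ne_zero_iff.mpr (pow_ne_zero 2 hθ0))
  · rw [prod_weilHeight_sq_pow_succ]
    gcongr
    rw [Finset.prod_eq_single_of_mem i₀ (Finset.mem_univ _) fun i _ hi => max_eq_left ?_]
    · exact max_le (one_le_absNorm_mul_sqrt_discr hI) (realPlace_apply (σ i₀) _ ▸ hθle)
    · rw [← realPlace_apply]
      exact (hθlt _ ((realPlace_injective.comp hσ).ne hi)).le

/-- Let `K` be a totally real number field of degree `d` with real embeddings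
`σ_1,…,σ_d` and `I ⊆ 𝒪_K` a nonzero ideal. Then there exist `ℚ`-linearly independent
totally nonnegative elements `α_1,…,α_d ∈ I⁺` with
`∏_i h(α_i) ≤ (3d√d)^d · (N_K(I)·√|Δ_K|)^{d+1}`. -/
theorem positive_successive_minima_height (K : Type*) [Field K] [NumberField K]
    (σ : Fin (Module.finrank ℚ K) → (K →+* ℝ)) (hσ : Function.Injective σ)
    (I : Ideal (𝓞 K)) (hI : I ≠ ⊥) :
    ∃ α : Fin (Module.finrank ℚ K) → 𝓞 K,
      (∀ i, α i ∈ I) ∧ (∀ i j, 0 ≤ σ j (α i : K)) ∧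
      LinearIndependent ℚ (fun i => (α i : K)) ∧
      ∏ i, weilHeight σ (α i : K) ≤
        (3 * (Module.finrank ℚ K : ℝ) * Real.sqrt (Module.finrank ℚ K)) ^
            (Module.finrank ℚ K) *
          ((Ideal.absNorm I : ℝ) * Real.sqrt |(discr K : ℝ)|) ^
            (Module.finrank ℚ K + 1) := by
  obtain ⟨α, hmem, hpos, hind, hle⟩ := positive_successive_minima_height_general K σ hσ I hI
  exact ⟨α, hmem, hpos, hind,
    hle.trans (le_mul_of_one_le_left (by positivity) (one_le_three_mul_mul_sqrt_pow _))⟩
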